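/- Let H be a real Hilbert space, 𝒳 ⊆ H, and let 𝒴 ⊆ H be open and convex. Let q(y|x) := exp(−a(x) − b(y) + c·⟨x, y⟩) for (x, y) ∈ 𝒳 × 𝒴, where c ≥ 0, a : 𝒳 → ℝ, and b : 𝒴 → ℝ is continuously differentiable with locally bounded derivative. Let P be a probability measure on 𝒳 such that for every y ∈ 𝒴 there exists r > 0 with ∫ (1 + ‖x‖)²·exp(−a(x) + c·r·‖x‖ + c·⟨x, y⟩) dP(x) < ∞. Then ∫ (1 + ‖x‖)·q(y|x) dP(x) < ∞ and ∫ q(y|x) dP(x) > 0 for all y ∈ 𝒴, the proto conditional mean f_P(y) := (∫ x·q(y|x) dP(x)) / (∫ q(y|x) dP(x)) is Fréchet differentiable on all of 𝒴 with Df_P(y) a symmetric positive semi-definite continuous linear operator for every y ∈ 𝒴, and f_P is a proximity operator of some penalty φ_P : H → ℝ ∪ {+∞}. -/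

import Mathlib

open MeasureTheory RealInnerProductSpace

/-- The "proto" conditional mean in a real Hilbert space for the proto conditional density `q`
(with `q y x` playing the role of `q(y|x)`) and the prior `P`. -/
noncomputable def protoMean {H : Type*} [NormedAddCommGroup H] [InnerProductSpace ℝ H]
    [CompleteSpace H] [MeasurableSpace H] (q : H → H → ℝ) (P : Measure H) (y : H) : H :=
  (∫ x, q y x ∂P)⁻¹ • ∫ x, q y x • x ∂P

section helpers

set_option linter.unusedSectionVars false

variable {H : Type*} [NormedAddCommGroup H] [InnerProductSpace ℝ H]

/-- If `f` is a selection of the subdifferential of `ψ` on `Y`, then `f` is a proximity operator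
of a penalty that never takes the value `-∞` (when `Y` is nonempty) and is finite on `f '' Y`. -/
lemma prox_of_subgradient (Y : Set H) (f : H → H) (ψ : H → ℝ)
    (h : ∀ y ∈ Y, ∀ z ∈ Y, ψ y + ⟪f y, z - y⟫ ≤ ψ z) :
    ∃ φ : H → EReal, (Y.Nonempty → ∀ x, φ x ≠ ⊥) ∧ (∀ y ∈ Y, φ (f y) ≠ ⊤) ∧
      ∀ y ∈ Y, ∀ x : H,
      ((2⁻¹ * ‖y - f y‖ ^ 2 : ℝ) : EReal) + φ (f y) ≤
        ((2⁻¹ * ‖y - x‖ ^ 2 : ℝ) : EReal) + φ x := by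
  have key : ∀ y ∈ Y, (⨆ z ∈ Y, ((⟪f y, z⟫ - ψ z - 2⁻¹ * ‖f y‖ ^ 2 : ℝ) : EReal)) ≤
      ((⟪f y, y⟫ - ψ y - 2⁻¹ * ‖f y‖ ^ 2 : ℝ) : EReal) := by
    intro y hy
    refine iSup₂_le fun z hz => ?_
    have := h y hy z hz
    rw [inner_sub_right] at this
    exact_mod_cast (by linarith)
  refine ⟨fun x => ⨆ z ∈ Y, ((⟪x, z⟫ - ψ z - 2⁻¹ * ‖x‖ ^ 2 : ℝ) : EReal), ?_, ?_, ?_⟩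
  · rintro ⟨z, hz⟩ x hx
    have h1 := le_iSup₂ (f := fun z (_ : z ∈ Y) =>
      ((⟪x, z⟫ - ψ z - 2⁻¹ * ‖x‖ ^ 2 : ℝ) : EReal)) z hz
    simp only at hx
    rw [hx] at h1
    exact EReal.coe_ne_bot _ (le_bot_iff.1 h1)
  · intro y hy hx
    simp only at hx
    have h1 := key y hy
    rw [hx] at h1
    exact EReal.coe_ne_top _ (top_le_iff.1 h1)
  · intro y hy x
    have h1 := le_iSup₂ (f := fun z (_ : z ∈ Y) =>
      ((⟪x, z⟫ - ψ z - 2⁻¹ * ‖x‖ ^ 2 : ℝ) : EReal)) y hy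
    refine (add_le_add le_rfl (key y hy)).trans (le_trans ?_ (add_le_add le_rfl h1))
    rw [← EReal.coe_add, ← EReal.coe_add, EReal.coe_le_coe_iff]
    rw [norm_sub_sq_real, norm_sub_sq_real, real_inner_comm y x, real_inner_comm y (f y)]
    linarith

/-- The unnormalised weight `exp(-a(x) + c⟨x,y⟩)`. -/
noncomputable def wgt (a : H → ℝ) (c : ℝ) (y x : H) : ℝ := Real.exp (-a x + c * ⟪x, y⟫)

lemma wgt_pos (a : H → ℝ) (c : ℝ) (y x : H) : 0 < wgt a c y x := Real.exp_pos _

lemma wgt_le (a : H → ℝ) {c r : ℝ} (hc : 0 ≤ c) {y y₀ : H} (hy : ‖y - y₀‖ ≤ r) (x : H) :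
    wgt a c y x ≤ Real.exp (-a x + c * r * ‖x‖ + c * ⟪x, y₀⟫) := by
  apply Real.exp_le_exp.2
  have h1 : ⟪x, y⟫ = ⟪x, y - y₀⟫ + ⟪x, y₀⟫ := by rw [inner_sub_right]; ring
  have h2 : ⟪x, y - y₀⟫ ≤ r * ‖x‖ :=
    (real_inner_le_norm _ _).trans (by nlinarith [norm_nonneg x])
  rw [h1]
  nlinarith [mul_le_mul_of_nonneg_left h2 hc]

variable [MeasurableSpace H] [BorelSpace H] {P : Measure H}

lemma wgt_meas {a : H → ℝ} {c r : ℝ} {y₀ : H}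
    (h : Integrable (fun x => (1 + ‖x‖) ^ 2 * Real.exp (-a x + c * r * ‖x‖ + c * ⟪x, y₀⟫)) P)
    (y : H) : AEStronglyMeasurable (wgt a c y) P := by
  have h1 : Continuous (fun x : H => ((1 + ‖x‖) ^ 2)⁻¹ *
      Real.exp (- (c * r * ‖x‖) - c * ⟪x, y₀⟫ + c * ⟪x, y⟫)) := by
    refine Continuous.mul (Continuous.inv₀ (by fun_prop) fun x => ?_) (by fun_prop)
    positivity
  refine (h.aestronglyMeasurable.mul h1.aestronglyMeasurable).congr (ae_of_all _ fun x => ?_)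
  have h2 : (1 + ‖x‖) ^ 2 ≠ 0 := by positivity
  simp only [Pi.mul_apply, wgt]
  rw [show ∀ A B C D : ℝ, A * B * (C * D) = (A * C) * (B * D) by intros; ring,
    mul_inv_cancel₀ h2, one_mul, ← Real.exp_add]
  congr 1
  ring

lemma wgt_int {a : H → ℝ} {c r : ℝ} (hc : 0 ≤ c) {y₀ : H}
    (h : Integrable (fun x => (1 + ‖x‖) ^ 2 * Real.exp (-a x + c * r * ‖x‖ + c * ⟪x, y₀⟫)) P)
    {y : H} (hy : ‖y - y₀‖ ≤ r) : Integrable (fun x => (1 + ‖x‖) ^ 2 * wgt a c y x) P := by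
  have h1 : Continuous (fun x : H => (1 + ‖x‖) ^ 2) := by fun_prop
  refine h.mono (h1.aestronglyMeasurable.mul (wgt_meas h y)) (ae_of_all _ fun x => ?_)
  have := (wgt_pos a c y x).le
  rw [Real.norm_of_nonneg (by positivity), Real.norm_of_nonneg (by positivity)]
  exact mul_le_mul_of_nonneg_left (wgt_le a hc hy x) (by positivity)

/-- Anything strongly measurable with growth at most quadratic is integrable for the weight. -/
lemma int_of_growth {E : Type*} [NormedAddCommGroup E] [NormedSpace ℝ E] {w : H → ℝ}
    (hw : ∀ x, 0 < w x) (hm : AEStronglyMeasurable w P)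
    (hi : Integrable (fun x => (1 + ‖x‖) ^ 2 * w x) P) {g : H → E}
    (hg : AEStronglyMeasurable g P) (C : ℝ) (hb : ∀ x, ‖g x‖ ≤ C * (1 + ‖x‖) ^ 2) :
    Integrable (fun x => w x • g x) P := by
  refine (hi.const_mul C).mono' (hm.smul hg) (ae_of_all _ fun x => ?_)
  rw [norm_smul, Real.norm_of_nonneg (hw x).le]
  nlinarith [mul_le_mul_of_nonneg_left (hb x) (hw x).le]

lemma wgt_hasFDerivAt (a : H → ℝ) (c : ℝ) (y x : H) :
    HasFDerivAt (fun y => wgt a c y x) ((c * wgt a c y x) • innerSL ℝ x) y := by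
  have h1 : HasFDerivAt (fun y : H => -a x + c * ⟪x, y⟫) (c • innerSL ℝ x) y :=
    (((innerSL ℝ x).hasFDerivAt (x := y)).const_mul c).const_add (-a x)
  have := h1.exp
  rw [smul_smul, mul_comm] at this
  exact this

lemma cont_rank : Continuous (fun x : H => (innerSL ℝ x).smulRight x) := by
  have := ((ContinuousLinearMap.smulRightL ℝ H H).continuous.comp
    (innerSL ℝ (E := H)).continuous).clm_apply continuous_id
  exact this

section main

variable [CompleteSpace H] {a : H → ℝ} {c r : ℝ} {y₀ : H}

lemma Z_deriv (hc : 0 ≤ c) (hr : 0 < r) (hid : AEStronglyMeasurable (fun x : H => x) P)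
    (h : Integrable (fun x => (1 + ‖x‖) ^ 2 * Real.exp (-a x + c * r * ‖x‖ + c * ⟪x, y₀⟫)) P) :
    HasFDerivAt (fun y => ∫ x, wgt a c y x ∂P)
      (∫ x, (c * wgt a c y₀ x) • innerSL ℝ x ∂P) y₀ := by
  have hw := wgt_int hc h (y := y₀) (by simpa using hr.le)
  refine hasFDerivAt_integral_of_dominated_of_fderiv_le (Metric.ball_mem_nhds y₀ hr)
    (F' := fun y x => (c * wgt a c y x) • innerSL ℝ x)
    (bound := fun x => c * ((1 + ‖x‖) ^ 2 * Real.exp (-a x + c * r * ‖x‖ + c * ⟪x, y₀⟫)))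
    (Filter.Eventually.of_forall fun y => wgt_meas h y) ?_ ?_ ?_ (h.const_mul c) ?_
  · have := int_of_growth (wgt_pos a c y₀) (wgt_meas h y₀) hw (g := fun _ => (1 : ℝ))
      aestronglyMeasurable_const 1 (fun x => by rw [norm_one]; nlinarith [norm_nonneg x])
    simpa using this
  · exact ((wgt_meas h y₀).const_mul c).smul
      ((innerSL ℝ (E := H)).continuous.comp_aestronglyMeasurable hid)
  · refine ae_of_all _ fun x y hy => ?_
    have h1 := wgt_le a hc (y := y) (y₀ := y₀) (r := r) (by
      rw [← dist_eq_norm]; exact (Metric.mem_ball.1 hy).le) x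
    have h0 := (wgt_pos a c y x).le
    rw [norm_smul, innerSL_apply_norm, Real.norm_of_nonneg (by positivity), mul_assoc]
    refine mul_le_mul_of_nonneg_left ?_ hc
    rw [mul_comm]
    exact mul_le_mul (by nlinarith [norm_nonneg x]) h1 h0 (by positivity)
  · exact ae_of_all _ fun x y _ => wgt_hasFDerivAt a c y x

lemma N_deriv (hc : 0 ≤ c) (hr : 0 < r) (hid : AEStronglyMeasurable (fun x : H => x) P)
    (h : Integrable (fun x => (1 + ‖x‖) ^ 2 * Real.exp (-a x + c * r * ‖x‖ + c * ⟪x, y₀⟫)) P) :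
    HasFDerivAt (fun y => ∫ x, wgt a c y x • x ∂P)
      (∫ x, (c * wgt a c y₀ x) • (innerSL ℝ x).smulRight x ∂P) y₀ := by
  have hw := wgt_int hc h (y := y₀) (by simpa using hr.le)
  refine hasFDerivAt_integral_of_dominated_of_fderiv_le (Metric.ball_mem_nhds y₀ hr)
    (F' := fun y x => (c * wgt a c y x) • (innerSL ℝ x).smulRight x)
    (bound := fun x => c * ((1 + ‖x‖) ^ 2 * Real.exp (-a x + c * r * ‖x‖ + c * ⟪x, y₀⟫)))
    (Filter.Eventually.of_forall fun y => (wgt_meas h y).smul hid) ?_ ?_ ?_ (h.const_mul c) ?_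
  · exact int_of_growth (wgt_pos a c y₀) (wgt_meas h y₀) hw hid 1
      (fun x => by nlinarith [norm_nonneg x])
  · exact ((wgt_meas h y₀).const_mul c).smul (cont_rank.comp_aestronglyMeasurable hid)
  · refine ae_of_all _ fun x y hy => ?_
    have h1 := wgt_le a hc (y := y) (y₀ := y₀) (r := r) (by
      rw [← dist_eq_norm]; exact (Metric.mem_ball.1 hy).le) x
    have h0 := (wgt_pos a c y x).le
    rw [norm_smul, ContinuousLinearMap.norm_smulRight_apply, innerSL_apply_norm,
      Real.norm_of_nonneg (by positivity), mul_assoc]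
    refine mul_le_mul_of_nonneg_left ?_ hc
    rw [mul_comm]
    exact mul_le_mul (by nlinarith [norm_nonneg x]) h1 h0 (by positivity)
  · refine ae_of_all _ fun x y _ => ?_
    have := (wgt_hasFDerivAt a c y x).smul_const x
    convert this using 1
    ext v
    simp [mul_smul]

lemma protoMean_eq {b : H → ℝ} {q : H → H → ℝ}
    (hq : ∀ y x : H, q y x = Real.exp (-a x - b y + c * ⟪x, y⟫)) :
    protoMean q P = fun y => (∫ x, wgt a c y x ∂P)⁻¹ • ∫ x, wgt a c y x • x ∂P := by
  funext y
  have h1 : ∀ x, q y x = Real.exp (-b y) * wgt a c y x := by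
    intro x
    rw [hq, wgt, ← Real.exp_add]
    congr 1
    ring
  simp only [protoMean, h1, mul_smul]
  rw [integral_const_mul, integral_smul, smul_smul]
  congr 1
  have := (Real.exp_pos (-b y)).ne'
  rw [mul_inv, mul_right_comm, inv_mul_cancel₀ this, one_mul]

lemma mean_deriv [IsProbabilityMeasure P] (hc : 0 ≤ c) (hr : 0 < r)
    (hid : AEStronglyMeasurable (fun x : H => x) P)
    (h : Integrable (fun x => (1 + ‖x‖) ^ 2 * Real.exp (-a x + c * r * ‖x‖ + c * ⟪x, y₀⟫)) P) :
    ∃ D : H →L[ℝ] H,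
      HasFDerivAt (fun y => (∫ x, wgt a c y x ∂P)⁻¹ • ∫ x, wgt a c y x • x ∂P) D y₀ ∧
      (∀ u v : H, ⟪u, D v⟫ = ⟪D u, v⟫) ∧ (∀ u : H, 0 ≤ ⟪u, D u⟫) := by
  have hw := wgt_int hc h (y := y₀) (by simpa using hr.le)
  have hm := wgt_meas h y₀
  have hp := wgt_pos a c y₀
  have i0 : Integrable (fun x => wgt a c y₀ x) P := by
    have := int_of_growth hp hm hw (g := fun _ => (1 : ℝ))
      aestronglyMeasurable_const 1 (fun x => by rw [norm_one]; nlinarith [norm_nonneg x])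
    simpa using this
  have i1 : Integrable (fun x => wgt a c y₀ x • x) P :=
    int_of_growth hp hm hw hid 1 (fun x => by nlinarith [norm_nonneg x])
  have i2 : Integrable (fun x => wgt a c y₀ x • innerSL ℝ x) P :=
    int_of_growth hp hm hw ((innerSL ℝ (E := H)).continuous.comp_aestronglyMeasurable hid) 1
      (fun x => by rw [innerSL_apply_norm]; nlinarith [norm_nonneg x])
  have i3 : Integrable (fun x => wgt a c y₀ x • (innerSL ℝ x).smulRight x) P :=
    int_of_growth hp hm hw (cont_rank.comp_aestronglyMeasurable hid) 1
      (fun x => by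
        rw [ContinuousLinearMap.norm_smulRight_apply, innerSL_apply_norm]
        nlinarith [norm_nonneg x])
  have hZ : 0 < ∫ x, wgt a c y₀ x ∂P := integral_exp_pos i0
  have dZ := Z_deriv hc hr hid h
  have dN := N_deriv hc hr hid h
  simp only [mul_smul] at dZ dN
  rw [integral_smul] at dZ dN
  have d := ((hasDerivAt_inv hZ.ne').comp_hasFDerivAt y₀ dZ).fun_smul dN
  have iA : ∀ u v : H, Integrable (fun x => wgt a c y₀ x * (⟪x, u⟫ * ⟪x, v⟫)) P := by
    intro u v
    refine int_of_growth hp hm hw (g := fun x => ⟪x, u⟫ * ⟪x, v⟫)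
      (Continuous.aestronglyMeasurable (by fun_prop)) (‖u‖ * ‖v‖) fun x => ?_
    rw [norm_mul]
    calc ‖⟪x, u⟫‖ * ‖⟪x, v⟫‖ ≤ (‖x‖ * ‖u‖) * (‖x‖ * ‖v‖) :=
          mul_le_mul (norm_inner_le_norm _ _) (norm_inner_le_norm _ _) (norm_nonneg _)
            (by positivity)
      _ = (‖u‖ * ‖v‖) * ‖x‖ ^ 2 := by ring
      _ ≤ _ := mul_le_mul_of_nonneg_left (by nlinarith [norm_nonneg x]) (by positivity)
  have iB : ∀ u : H, Integrable (fun x => wgt a c y₀ x * ⟪x, u⟫) P := by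
    intro u
    refine int_of_growth hp hm hw (g := fun x => ⟪x, u⟫)
      (Continuous.aestronglyMeasurable (by fun_prop)) (‖u‖) fun x => ?_
    calc ‖⟪x, u⟫‖ ≤ ‖x‖ * ‖u‖ := norm_inner_le_norm _ _
      _ ≤ _ := by
        rw [mul_comm]
        exact mul_le_mul_of_nonneg_left (by nlinarith [norm_nonneg x]) (by positivity)
  have eN : ∀ u : H, ⟪u, ∫ x, wgt a c y₀ x • x ∂P⟫ = ∫ x, wgt a c y₀ x * ⟪x, u⟫ ∂P := by
    intro u
    rw [← integral_inner i1]
    simp only [inner_smul_right, real_inner_comm u]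
  have eZ' : ∀ v : H, (∫ x, wgt a c y₀ x • innerSL ℝ x ∂P) v =
      ∫ x, wgt a c y₀ x * ⟪x, v⟫ ∂P := by
    intro v
    rw [ContinuousLinearMap.integral_apply i2]
    simp
  have eN' : ∀ u v : H, ⟪u, (∫ x, wgt a c y₀ x • (innerSL ℝ x).smulRight x ∂P) v⟫ =
      ∫ x, wgt a c y₀ x * (⟪x, u⟫ * ⟪x, v⟫) ∂P := by
    intro u v
    rw [ContinuousLinearMap.integral_apply i3, ← integral_inner (i3.apply_continuousLinearMap v)]
    refine integral_congr_ae (ae_of_all _ fun x => ?_)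
    simp only [smul_apply, ContinuousLinearMap.smulRight_apply, inner_smul_right,
      real_inner_comm x u, innerSL_apply_apply]
    ring
  set Z := ∫ x, wgt a c y₀ x ∂P with hZdef
  have formula : ∀ u v : H, ⟪u, (Z⁻¹ • c • (∫ x, wgt a c y₀ x • (innerSL ℝ x).smulRight x ∂P) +
      ((-(Z ^ 2)⁻¹) • c • ∫ x, wgt a c y₀ x • innerSL ℝ x ∂P).smulRight
        (∫ x, wgt a c y₀ x • x ∂P)) v⟫ =
      c * (Z⁻¹ * (∫ x, wgt a c y₀ x * (⟪x, u⟫ * ⟪x, v⟫) ∂P) -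
        (Z⁻¹) ^ 2 * ((∫ x, wgt a c y₀ x * ⟪x, u⟫ ∂P) * ∫ x, wgt a c y₀ x * ⟪x, v⟫ ∂P)) := by
    intro u v
    simp only [add_apply, smul_apply,
      ContinuousLinearMap.smulRight_apply, inner_add_right, inner_smul_right, eN', eZ', eN,
      smul_eq_mul]
    ring
  refine ⟨_, d, ?_, ?_⟩
  · intro u v
    refine (formula u v).trans (Eq.trans ?_ ((real_inner_comm _ _).trans (formula v u)).symm)
    simp only [mul_comm]
  · intro u
    refine le_of_le_of_eq ?_ (formula u u).symm
    refine mul_nonneg hc ?_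
    set B := ∫ x, wgt a c y₀ x * ⟪x, u⟫ ∂P with hB
    set A := ∫ x, wgt a c y₀ x * (⟪x, u⟫ * ⟪x, u⟫) ∂P with hA
    have e1 : ∫ x, wgt a c y₀ x * (⟪x, u⟫ - Z⁻¹ * B) ^ 2 ∂P =
        A - 2 * (Z⁻¹ * B) * B + (Z⁻¹ * B) ^ 2 * Z := by
      generalize Z⁻¹ * B = t
      rw [hA, hB, hZdef, ← integral_const_mul, ← integral_const_mul,
        ← integral_sub (iA u u) ((iB u).const_mul _)]
      refine Eq.trans ?_ (integral_add ((iA u u).sub ((iB u).const_mul _)) (i0.const_mul _))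
      refine integral_congr_ae (ae_of_all _ fun x => ?_)
      simp only [Pi.sub_apply]
      ring
    have e2 : 0 ≤ ∫ x, wgt a c y₀ x * (⟪x, u⟫ - Z⁻¹ * B) ^ 2 ∂P :=
      integral_nonneg fun x => mul_nonneg (hp x).le (sq_nonneg _)
    rw [e1] at e2
    have e3 : Z⁻¹ * A - Z⁻¹ ^ 2 * (B * B) =
        Z⁻¹ * (A - 2 * (Z⁻¹ * B) * B + (Z⁻¹ * B) ^ 2 * Z) := by
      field_simp
      ring
    rw [e3]
    exact mul_nonneg (inv_nonneg.2 hZ.le) e2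

/-- Jensen: the log-partition function has subgradient `c • f`. -/
lemma Z_ineq [IsProbabilityMeasure P] {y z : H}
    (hid : AEStronglyMeasurable (fun x : H => x) P)
    (hm : AEStronglyMeasurable (wgt a c y) P)
    (hy : Integrable (fun x => (1 + ‖x‖) ^ 2 * wgt a c y x) P)
    (hz : Integrable (fun x => wgt a c z x) P) :
    (∫ x, wgt a c y x ∂P) * Real.exp (c * ⟪(∫ x, wgt a c y x ∂P)⁻¹ • ∫ x, wgt a c y x • x ∂P, z - y⟫)
      ≤ ∫ x, wgt a c z x ∂P := by
  have hp := wgt_pos a c y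
  have i0 : Integrable (fun x => wgt a c y x) P := by
    have := int_of_growth hp hm hy (g := fun _ => (1 : ℝ))
      aestronglyMeasurable_const 1 (fun x => by rw [norm_one]; nlinarith [norm_nonneg x])
    simpa using this
  have i1 : Integrable (fun x => wgt a c y x • x) P :=
    int_of_growth hp hm hy hid 1 (fun x => by nlinarith [norm_nonneg x])
  have hZ : 0 < ∫ x, wgt a c y x ∂P := integral_exp_pos i0
  set Z := ∫ x, wgt a c y x ∂P with hZdef
  set N := ∫ x, wgt a c y x • x ∂P with hN
  set m := c * ⟪Z⁻¹ • N, z - y⟫ with hmdef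
  have i2 : Integrable (fun x => ⟪z - y, wgt a c y x • x⟫) P := i1.const_inner _
  have e1 : ∫ x, Real.exp m * ((1 - m) * wgt a c y x + c * ⟪z - y, wgt a c y x • x⟫) ∂P =
      Z * Real.exp m := by
    rw [integral_const_mul, integral_add (i0.const_mul _) (i2.const_mul _), integral_const_mul,
      integral_const_mul, integral_inner i1, ← hZdef, ← hN]
    have : c * ⟪z - y, N⟫ = Z * m := by
      rw [hmdef, inner_smul_left, real_inner_comm]
      simp
      field_simp
    rw [this]
    ring
  rw [← e1]
  refine integral_mono (((i0.const_mul _).add (i2.const_mul _)).const_mul _) hz fun x => ?_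
  have e2 : wgt a c z x = wgt a c y x * (Real.exp m * Real.exp (c * ⟪x, z - y⟫ - m)) := by
    rw [wgt, wgt, ← Real.exp_add, ← Real.exp_add, inner_sub_right]
    congr 1
    ring
  have e3 := Real.add_one_le_exp (c * ⟪x, z - y⟫ - m)
  simp only [inner_smul_right]
  rw [e2, real_inner_comm x (z - y)]
  have := mul_le_mul_of_nonneg_left e3 (mul_pos (hp x) (Real.exp_pos m)).le
  nlinarith [this]

end main

end helpers

/-- For an exponential-family proto conditional density `q(y|x) = exp(−a(x) − b(y) + c⟨x,y⟩)`
with `c ≥ 0` and `b` C¹ with locally bounded derivative, and any prior `P` satisfying the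
moment condition, the proto conditional mean is well defined, differentiable on `𝒴` with a
symmetric positive semi-definite differential, and is a proximity operator of some penalty. -/
theorem stmt13 {H : Type*} [NormedAddCommGroup H] [InnerProductSpace ℝ H]
    [CompleteSpace H] [MeasurableSpace H] [BorelSpace H]
    (X Y : Set H) (hYo : IsOpen Y) (hYc : Convex ℝ Y)
    (c : ℝ) (hc : 0 ≤ c) (a : H → ℝ) (b : H → ℝ) (b' : H → H)
    (hb : ∀ y ∈ Y, HasGradientAt b (b' y) y) (hb'c : ContinuousOn b' Y)
    (hb'loc : ∀ y ∈ Y, ∃ ε > 0, ∃ M : ℝ, ∀ y' ∈ Y, ‖y' - y‖ < ε → ‖b' y'‖ ≤ M)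
    (q : H → H → ℝ) (hq : ∀ y x : H, q y x = Real.exp (-a x - b y + c * ⟪x, y⟫))
    (P : Measure H) [IsProbabilityMeasure P] (hPX : ∀ᵐ x ∂P, x ∈ X)
    (hPint : ∀ y ∈ Y, ∃ r > (0 : ℝ), Integrable
      (fun x => (1 + ‖x‖) ^ 2 * Real.exp (-a x + c * r * ‖x‖ + c * ⟪x, y⟫)) P) :
    (∀ y ∈ Y, Integrable (fun x => (1 + ‖x‖) * q y x) P ∧ 0 < ∫ x, q y x ∂P) ∧
    (∃ D : H → H →L[ℝ] H, ∀ y ∈ Y,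
      HasFDerivAt (protoMean q P) (D y) y ∧
      (∀ u v : H, ⟪u, D y v⟫ = ⟪D y u, v⟫) ∧
      (∀ u : H, 0 ≤ ⟪u, D y u⟫)) ∧
    (∃ φ : H → EReal, ∀ y ∈ Y, ∀ x : H,
      ((2⁻¹ * ‖y - protoMean q P y‖ ^ 2 : ℝ) : EReal) + φ (protoMean q P y) ≤
        ((2⁻¹ * ‖y - x‖ ^ 2 : ℝ) : EReal) + φ x) := by
  have hmean := protoMean_eq (P := P) hq
  have hpart : ∀ y ∈ Y, Integrable (fun x => (1 + ‖x‖) ^ 2 * wgt a c y x) P ∧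
      (∀ z, AEStronglyMeasurable (wgt a c z) P) ∧ Integrable (fun x => wgt a c y x) P := by
    intro y hy
    obtain ⟨r, hr, h⟩ := hPint y hy
    have hw := wgt_int hc h (y := y) (by simpa using hr.le)
    refine ⟨hw, fun z => wgt_meas h z, ?_⟩
    have := int_of_growth (wgt_pos a c y) (wgt_meas h y) hw (g := fun _ => (1 : ℝ))
      aestronglyMeasurable_const 1 (fun x => by rw [norm_one]; nlinarith [norm_nonneg x])
    simpa using this
  have hqw : ∀ y x, q y x = Real.exp (-b y) * wgt a c y x := by
    intro y x
    rw [hq, wgt, ← Real.exp_add]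
    congr 1
    ring
  refine ⟨?_, ?_⟩
  · intro y hy
    obtain ⟨hw, hm, h0⟩ := hpart y hy
    constructor
    · have := int_of_growth (wgt_pos a c y) (hm y) hw (g := fun x => 1 + ‖x‖)
        (Continuous.aestronglyMeasurable (by fun_prop)) 1 (fun x => by
          rw [Real.norm_of_nonneg (by positivity)]; nlinarith [norm_nonneg x])
      refine (this.const_mul (Real.exp (-b y))).congr (ae_of_all _ fun x => ?_)
      simp only [hqw, smul_eq_mul]
      ring
    · simp only [hqw]
      rw [integral_const_mul]
      exact mul_pos (Real.exp_pos _) (integral_exp_pos h0)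
  by_cases hid : AEStronglyMeasurable (fun x : H => x) P
  · constructor
    · have : ∀ y, ∃ D : H →L[ℝ] H, y ∈ Y → (HasFDerivAt (protoMean q P) D y ∧
          (∀ u v : H, ⟪u, D v⟫ = ⟪D u, v⟫) ∧ (∀ u : H, 0 ≤ ⟪u, D u⟫)) := by
        intro y
        by_cases hy : y ∈ Y
        · obtain ⟨r, hr, h⟩ := hPint y hy
          obtain ⟨D, hD⟩ := mean_deriv hc hr hid h
          exact ⟨D, fun _ => by rw [hmean]; exact hD⟩
        · exact ⟨0, fun h => absurd h hy⟩
      choose D hD using this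
      exact ⟨D, hD⟩
    · rcases hc.eq_or_lt with h0 | hcpos
      · obtain ⟨φ, -, -, hφ⟩ := prox_of_subgradient Y (protoMean q P)
          (fun z => ⟪protoMean q P 0, z⟫) (by
            intro y _ z _
            have : protoMean q P y = protoMean q P 0 := by
              rw [hmean, ← h0]
              simp [wgt]
            rw [this, inner_sub_right]
            linarith)
        exact ⟨φ, hφ⟩
      · obtain ⟨φ, -, -, hφ⟩ := prox_of_subgradient Y (protoMean q P)
          (fun z => c⁻¹ * Real.log (∫ x, wgt a c z x ∂P)) (by
            intro y hy z hz
            obtain ⟨hw, hm, h0⟩ := hpart y hy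
            have hZy : 0 < ∫ x, wgt a c y x ∂P := integral_exp_pos h0
            have key := Real.log_le_log (mul_pos hZy (Real.exp_pos _))
              (Z_ineq hid (hm y) hw (hpart z hz).2.2)
            rw [Real.log_mul hZy.ne' (Real.exp_pos _).ne', Real.log_exp] at key
            have key2 := mul_le_mul_of_nonneg_left key (inv_nonneg.2 hc)
            rw [mul_add, inv_mul_cancel_left₀ hcpos.ne'] at key2
            rw [hmean]
            exact key2)
        exact ⟨φ, hφ⟩
  · -- `P` is not (a.e.) separably supported: the Bochner integral is `0` by convention
    have hzero : ∀ y ∈ Y, protoMean q P y = 0 := by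
      intro y hy
      rw [hmean]
      simp only
      rw [integral_non_aestronglyMeasurable (f := fun x => wgt a c y x • x), smul_zero]
      intro hcon
      apply hid
      have h1 : AEStronglyMeasurable (fun x => (wgt a c y x)⁻¹) P :=
        ((hpart y hy).2.1 y).aemeasurable.inv.aestronglyMeasurable
      refine (h1.smul hcon).congr (ae_of_all _ fun x => ?_)
      simp [smul_smul, inv_mul_cancel₀ (wgt_pos a c y x).ne']
    constructor
    · refine ⟨fun _ => 0, fun y hy => ⟨?_, by simp, by simp⟩⟩
      refine (hasFDerivAt_const (0 : H) y).congr_of_eventuallyEq ?_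
      filter_upwards [hYo.mem_nhds hy] with z hz using hzero z hz
    · obtain ⟨φ, -, -, hφ⟩ := prox_of_subgradient Y (protoMean q P) (fun _ => 0) (by
        intro y hy z _
        simp [hzero y hy])
      exact ⟨φ, hφ⟩
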